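/- The correspondences between stochastic valuations and probability assignments are mutually inverse: for every stochastic valuation μ, the unique stochastic valuation μ^{P_μ} induced by the probability assignment P_μ equals μ; and for every probability assignment P, the probability assignment P_{μ^P} induced by the stochastic valuation μ^P equals P, i.e., μ^P{v : v ⊨ β} = P(β) for every propositional formula β. -/

import Mathlib

open MeasureTheory

/-- Propositional formulas over atoms `B_j`, `j : ℕ`, with `¬` and `→`. -/
inductive PropForm : Type
  | atom : ℕ → PropForm
  | neg : PropForm → PropForm
  | imp : PropForm → PropForm → PropForm
  deriving DecidableEq

namespace PropForm

def conj (α β : PropForm) : PropForm := neg (imp α (neg β))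
def disj (α β : PropForm) : PropForm := imp (neg α) β
def biimp (α β : PropForm) : PropForm := conj (imp α β) (imp β α)
def top : PropForm := imp (atom 0) (atom 0)
def bot : PropForm := neg top

/-- Satisfaction of a formula by a valuation `v : ℕ → Bool` (a subset of ℕ). -/
def sat (v : ℕ → Bool) : PropForm → Prop
  | atom j => v j = true
  | neg α => ¬ sat v α
  | imp α β => sat v α → sat v β

/-- The finite set `B_α` of indices of atoms occurring in `α`. -/
def atoms : PropForm → Finset ℕ
  | atom j => {j}
  | neg α => atoms α
  | imp α β => atoms α ∪ atoms β

end PropForm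

/-- `⊨ α`: every valuation satisfies `α`. -/
def Valid (α : PropForm) : Prop := ∀ v, PropForm.sat v α

/-- `α ⊨ β`. -/
def Entails (α β : PropForm) : Prop := ∀ v, PropForm.sat v α → PropForm.sat v β

/-- `Δ ⊨ α`. -/
def SetEntails (Δ : Set PropForm) (α : PropForm) : Prop :=
  ∀ v, (∀ δ ∈ Δ, PropForm.sat v δ) → PropForm.sat v α

/-- Conjunction of a list of formulas (empty conjunction is `⊤`). -/
def bigConj (l : List PropForm) : PropForm := l.foldr PropForm.conj PropForm.top

/-- Disjunction of a list of formulas (empty disjunction is `⊥`). -/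
def bigDisj (l : List PropForm) : PropForm := l.foldr PropForm.disj PropForm.bot

/-- `φ_A^U = (⋀_{j∈U} B_j) ∧ (⋀_{j∈A∖U} ¬B_j)`. -/
def phi (A U : Finset ℕ) : PropForm :=
  PropForm.conj (bigConj ((U.sort (· ≤ ·)).map PropForm.atom))
    (bigConj (((A \ U).sort (· ≤ ·)).map (fun j => PropForm.neg (PropForm.atom j))))

/-- The space of valuations, `2^ℕ` identified with `{0,1}^ℕ`, with the product σ-algebra. -/
abbrev Val := ℕ → Bool

/-- `v ∩ A` for a valuation `v` and a finite `A ⊆ ℕ`. -/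
def restrict (v : Val) (A : Finset ℕ) : Finset ℕ := A.filter (fun j => v j = true)

/-- `Prob_μ(α) = μ{v : v ⊨ α}`. -/
noncomputable def Prob (μ : Measure Val) (α : PropForm) : ℝ :=
  (μ {v | PropForm.sat v α}).toReal

/-- Adams' probability assignment: P1–P4. -/
structure IsProbAssignment (P : PropForm → ℝ) : Prop where
  nonneg : ∀ α, 0 ≤ P α
  le_one : ∀ α, P α ≤ 1
  valid_one : ∀ α, Valid α → P α = 1
  mono : ∀ α β, Entails α β → P α ≤ P β
  additive : ∀ α β, Valid (PropForm.neg (PropForm.conj β α)) →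
      P (PropForm.disj β α) = P β + P α

/-!
A formula `β` whose atoms lie in a finite set `A` is the exclusive disjunction of the `φ_A^U` that
entail it (disjunctive normal form), so an additive function on formulas is determined by its values
on the `φ_A^U`. Both `P` and `Prob μ` are additive, hence they agree as soon as they agree
on these. The sets of models of formulas form a π-system generating the product σ-algebra, so
`Prob μ` in turn determines `μ`.
-/

namespace PropForm

/-- The set of models of a formula, through which propositional connectives and semantic relations
become set operations and inclusions. -/
def models (α : PropForm) : Set Val := {v | sat v α}

theorem models_neg (α : PropForm) : (neg α).models = α.modelsᶜ := rfl

theorem sat_conj {v : Val} {α β : PropForm} : sat v (conj α β) ↔ sat v α ∧ sat v β := by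
  simp [conj, sat]

theorem models_conj (α β : PropForm) : (conj α β).models = α.models ∩ β.models :=
  Set.ext fun _ => sat_conj

theorem models_disj (α β : PropForm) : (disj α β).models = α.models ∪ β.models := by
  ext v
  simp [models, disj, sat, or_iff_not_imp_left]

theorem models_top : top.models = Set.univ :=
  Set.eq_univ_of_forall fun _ => id

theorem sat_bigConj {v : Val} {l : List PropForm} : sat v (bigConj l) ↔ ∀ α ∈ l, sat v α := by
  induction l with
  | nil => simp [bigConj, top, sat]
  | cons α l ih =>
    rw [List.forall_mem_cons, ← ih]
    exact sat_conj

theorem atoms_nonempty (α : PropForm) : α.atoms.Nonempty := by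
  induction α with
  | atom j => exact Finset.singleton_nonempty j
  | neg _ ih => exact ih
  | imp _ _ ih _ => exact ih.inl

theorem sat_congr {v w : Val} {α : PropForm} (h : ∀ j ∈ α.atoms, v j = w j) :
    sat v α ↔ sat w α := by
  induction α with
  | atom j => simp [sat, h j (Finset.mem_singleton_self j)]
  | neg α ih => exact not_congr (ih h)
  | imp α β ihα ihβ =>
    exact imp_congr (ihα fun j hj => h j (Finset.mem_union_left _ hj))
      (ihβ fun j hj => h j (Finset.mem_union_right _ hj))

theorem measurableSet_models (α : PropForm) : MeasurableSet α.models := by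
  induction α with
  | atom j => exact measurable_pi_apply (X := fun _ : ℕ => Bool) j (measurableSet_singleton true)
  | neg α ih => exact ih.compl
  | imp α β ihα ihβ => exact ihα.imp ihβ

theorem isPiSystem_range_models : IsPiSystem (Set.range models) := by
  rintro _ ⟨α, rfl⟩ _ ⟨β, rfl⟩ _
  exact ⟨conj α β, models_conj α β⟩

theorem generateFrom_range_models :
    MeasurableSpace.generateFrom (Set.range models) = MeasurableSpace.pi := by
  apply le_antisymm
  · exact MeasurableSpace.generateFrom_le (Set.forall_mem_range.2 measurableSet_models)
  · refine iSup_le fun j => measurable_iff_comap_le.1 (measurable_to_bool ?_)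
    exact MeasurableSpace.measurableSet_generateFrom ⟨atom j, rfl⟩

end PropForm

open PropForm

theorem restrict_eq_restrict_iff {v w : Val} {A : Finset ℕ} :
    restrict v A = restrict w A ↔ ∀ j ∈ A, v j = w j := by
  simp only [restrict, Finset.filter_inj', Bool.coe_iff_coe]

theorem sat_phi_iff_forall {v : Val} {A U : Finset ℕ} :
    sat v (phi A U) ↔ (∀ j ∈ U, v j = true) ∧ ∀ j ∈ A, j ∉ U → ¬ v j = true := by
  simp only [phi, sat_conj, sat_bigConj, List.forall_mem_map, Finset.mem_sort,
    Finset.mem_sdiff, and_imp, sat]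

theorem sat_phi_iff {v : Val} {A U : Finset ℕ} (hU : U ⊆ A) :
    sat v (phi A U) ↔ restrict v A = U := by
  simp only [sat_phi_iff_forall, restrict, Finset.ext_iff, Finset.mem_filter]
  grind

theorem models_phi {A U : Finset ℕ} (hU : U ⊆ A) :
    (phi A U).models = {v | restrict v A = U} :=
  Set.ext fun _ => sat_phi_iff hU

theorem pairwiseDisjoint_models_phi (A : Finset ℕ) :
    (A.powerset : Set (Finset ℕ)).PairwiseDisjoint fun U => (phi A U).models := by
  intro U hU V hV hUV
  rw [Function.onFun, models_phi (Finset.mem_powerset.1 hU), models_phi (Finset.mem_powerset.1 hV)]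
  exact Set.disjoint_left.2 fun v hvU hvV => hUV (hvU.symm.trans hvV)

open Classical in
theorem models_eq_biUnion_models_phi {A : Finset ℕ} {β : PropForm} (hA : β.atoms ⊆ A) :
    β.models = ⋃ U ∈ A.powerset.filter fun U => Entails (phi A U) β, (phi A U).models := by
  ext v
  simp only [Set.mem_iUnion, Finset.mem_filter, Finset.mem_powerset, exists_prop]
  constructor
  · intro hv
    have hvA : restrict v A ⊆ A := Finset.filter_subset _ _
    refine ⟨restrict v A, ⟨hvA, fun w hw => ?_⟩, (sat_phi_iff hvA).2 rfl⟩
    have hwv : restrict w A = restrict v A := (sat_phi_iff hvA).1 hw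
    exact (sat_congr fun j hj => restrict_eq_restrict_iff.1 hwv j (hA hj)).2 hv
  · rintro ⟨U, ⟨-, hUβ⟩, hv⟩
    exact hUβ v hv

/-- Finitely additive functions on formulas, the common setting for probability assignments and for
`Prob μ`. The conditions are on sets of models, so that invariance under logical equivalence
is built in. -/
structure IsFinitelyAdditive {M : Type*} [AddCommMonoid M] (P : PropForm → M) : Prop where
  eq_zero : ∀ α, α.models = ∅ → P α = 0
  eq_add : ∀ α β γ, γ.models = α.models ∪ β.models → Disjoint α.models β.models →
    P γ = P α + P β

namespace IsFinitelyAdditive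

variable {M : Type*} [AddCommMonoid M] {P Q : PropForm → M}

theorem eq_sum (hP : IsFinitelyAdditive P) {ι : Type*} {s : Finset ι} {f : ι → PropForm}
    (hf : (s : Set ι).PairwiseDisjoint fun i => (f i).models) {β : PropForm}
    (hβ : β.models = ⋃ i ∈ s, (f i).models) : P β = ∑ i ∈ s, P (f i) := by
  classical
  induction s using Finset.induction_on generalizing β with
  | empty => exact hP.eq_zero β (by simpa using hβ)
  | insert a s ha ih =>
    rw [Finset.coe_insert, Set.pairwiseDisjoint_insert_of_notMem (by simpa using ha)] at hf
    rw [Finset.set_biUnion_insert] at hβ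
    have hdisj : Disjoint (f a).models (⋃ i ∈ s, (f i).models) :=
      Set.disjoint_iUnion₂_right.2 hf.2
    have hrest : (conj β (neg (f a))).models = ⋃ i ∈ s, (f i).models := by
      rw [models_conj, models_neg, hβ, ← Set.sdiff_eq, Set.union_sdiff_cancel_left hdisj.le_bot]
    rw [Finset.sum_insert ha, ← ih hf.1 hrest]
    rw [← hrest] at hβ hdisj
    exact hP.eq_add _ _ _ hβ hdisj

theorem eq_of_eq_on_phi (hP : IsFinitelyAdditive P) (hQ : IsFinitelyAdditive Q)
    (h : ∀ A : Finset ℕ, A.Nonempty → ∀ U ⊆ A, P (phi A U) = Q (phi A U)) : P = Q := by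
  classical
  funext β
  have hβ := models_eq_biUnion_models_phi (subset_refl β.atoms)
  have hdisj := (pairwiseDisjoint_models_phi β.atoms).subset
    (Finset.coe_subset.2 (Finset.filter_subset (fun U => Entails (phi β.atoms U) β) _))
  rw [hP.eq_sum hdisj hβ, hQ.eq_sum hdisj hβ]
  refine Finset.sum_congr rfl fun U hU => h _ β.atoms_nonempty U ?_
  exact Finset.mem_powerset.1 (Finset.mem_filter.1 hU).1

end IsFinitelyAdditive

theorem IsProbAssignment.eq_of_models_eq {P : PropForm → ℝ} (hP : IsProbAssignment P)
    {α β : PropForm} (h : α.models = β.models) : P α = P β :=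
  le_antisymm (hP.mono α β h.le) (hP.mono β α h.ge)

theorem IsProbAssignment.isFinitelyAdditive {P : PropForm → ℝ} (hP : IsProbAssignment P) :
    IsFinitelyAdditive P := by
  have eq_add (α β γ : PropForm) (hγ : γ.models = α.models ∪ β.models)
      (hdisj : Disjoint α.models β.models) : P γ = P α + P β := by
    have hvalid : Valid (neg (conj α β)) := by
      refine Set.eq_univ_iff_forall.1 (?_ : (neg (conj α β)).models = Set.univ)
      rw [models_neg, models_conj, hdisj.inter_eq, Set.compl_empty]
    rw [← hP.additive β α hvalid]
    exact hP.eq_of_models_eq (hγ.trans (models_disj α β).symm)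
  refine ⟨fun α hα => ?_, eq_add⟩
  have hαα : P α = P α + P α := eq_add α α α (Set.union_self _).symm (by simp [hα])
  exact left_eq_add.1 hαα

theorem prob_eq_measureReal_models (μ : Measure Val) (α : PropForm) :
    Prob μ α = μ.real α.models := rfl

theorem isFinitelyAdditive_prob (μ : Measure Val) [IsFiniteMeasure μ] :
    IsFinitelyAdditive (Prob μ) where
  eq_zero α hα := by
    rw [prob_eq_measureReal_models, hα, measureReal_empty]
  eq_add α β γ hγ hdisj := by
    simp only [prob_eq_measureReal_models, hγ]
    exact measureReal_union hdisj β.measurableSet_models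

theorem prob_phi (μ : Measure Val) {A U : Finset ℕ} (hU : U ⊆ A) :
    Prob μ (phi A U) = (μ {v | restrict v A = U}).toReal := by
  rw [prob_eq_measureReal_models, models_phi hU, measureReal_def]

theorem measure_ext_of_prob {μ ν : Measure Val} [IsFiniteMeasure μ] [IsFiniteMeasure ν]
    (h : Prob μ = Prob ν) : μ = ν := by
  have measure_models_eq (α : PropForm) : μ α.models = ν α.models :=
    (measureReal_eq_measureReal_iff).1 (congrFun h α)
  refine ext_of_generate_finite _ generateFrom_range_models.symm isPiSystem_range_models
    (Set.forall_mem_range.2 measure_models_eq) ?_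
  rw [← models_top, measure_models_eq]

theorem prob_eq_of_measure_restrict_eq {P : PropForm → ℝ} (hP : IsFinitelyAdditive P)
    (μ : Measure Val) [IsFiniteMeasure μ]
    (h : ∀ A : Finset ℕ, A.Nonempty → ∀ U ⊆ A,
      (μ {v | restrict v A = U}).toReal = P (phi A U)) :
    Prob μ = P :=
  (isFinitelyAdditive_prob μ).eq_of_eq_on_phi hP fun A hA U hU =>
    (prob_phi μ hU).trans (h A hA U hU)

theorem stochastic_probAssignment_galois_general :
    (∀ μ ν : Measure Val, IsFiniteMeasure μ → IsFiniteMeasure ν →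
      (∀ A : Finset ℕ, A.Nonempty → ∀ U ⊆ A,
        (ν {v | restrict v A = U}).toReal = Prob μ (phi A U)) →
      ν = μ) ∧
    (∀ P : PropForm → ℝ, IsFinitelyAdditive P →
      ∀ μ : Measure Val, IsFiniteMeasure μ →
      (∀ A : Finset ℕ, A.Nonempty → ∀ U ⊆ A,
        (μ {v | restrict v A = U}).toReal = P (phi A U)) →
      ∀ β : PropForm, Prob μ β = P β) := by
  refine ⟨fun μ ν _ _ h => ?_, fun P hP μ _ h => ?_⟩
  · exact measure_ext_of_prob (prob_eq_of_measure_restrict_eq (isFinitelyAdditive_prob μ) ν h)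
  · exact congrFun (prob_eq_of_measure_restrict_eq hP μ h)

/-- the correspondences between stochastic valuations and probability
assignments are mutually inverse. First part: any probability measure `ν` whose cylinder
probabilities are given by the probability assignment `P_μ` of `μ` equals `μ`
(i.e. `μ^{P_μ} = μ`). Second part: for a probability assignment `P`, the measure `μ^P`
(characterized by its cylinder probabilities) induces back `P`:
`μ^P{v : v ⊨ β} = P(β)` for every formula `β`. -/
theorem stochastic_probAssignment_galois :
    (∀ μ ν : MeasureTheory.Measure Val, IsProbabilityMeasure μ → IsProbabilityMeasure ν →
      (∀ A : Finset ℕ, A.Nonempty → ∀ U ⊆ A,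
        (ν {v | restrict v A = U}).toReal = Prob μ (phi A U)) →
      ν = μ) ∧
    (∀ P : PropForm → ℝ, IsProbAssignment P →
      ∀ μ : MeasureTheory.Measure Val, IsProbabilityMeasure μ →
      (∀ A : Finset ℕ, A.Nonempty → ∀ U ⊆ A,
        (μ {v | restrict v A = U}).toReal = P (phi A U)) →
      ∀ β : PropForm, Prob μ β = P β) :=
  ⟨fun μ ν _ _ => stochastic_probAssignment_galois_general.1 μ ν inferInstance inferInstance,
    fun P hP μ _ => stochastic_probAssignment_galois_general.2 P hP.isFinitelyAdditive μ
      inferInstance⟩
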